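/- Let d ≥ 1, let ρ be a d×d complex matrix, and let k ≥ 1. Index the tensor factors by ZMod k, and for g : ZMod k let τ_g be the translation permutation x ↦ x + g of ZMod k. Then (1/k) ∑_{g : ZMod k} tr(W(τ_g) * ρ^{⊗ ZMod k}) = (1/k) ∑_{m | k} φ(m) · (tr(ρ^m))^{k/m}, where the sum ranges over the positive divisors m of k and φ is Euler's totient function. -/

import Mathlib

/-!
Expanding the matrix product, `tr (W(π) ρ^{⊗ι}) = ∑ y, ∏ i, ρ (y i) (y (π i))`, which factors over
the cycles of `π`, a cycle of length `m` contributing the closed-walk sum `tr (ρ ^ m)`.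
If `g : ZMod k` has additive order `m`, translation by `g` has the `k / m` cosets of the subgroup
generated by `g` as its cycles, each of length `m`; choosing coset representatives identifies
`ZMod k` with `(ZMod k ⧸ ⟨g⟩) × Fin m`, translation becoming `(q, j) ↦ (q, j + 1)`.
So the summand at `g` is `tr (ρ ^ m) ^ (k / m)`, and there are `φ(m)` elements of each order
`m ∣ k`.
-/

open Matrix

/-- The `ι`-fold tensor power of a matrix `ρ`, with entries `∏ i, ρ (x i) (y i)`. -/
noncomputable def tensorPow {d : ℕ} (ρ : Matrix (Fin d) (Fin d) ℂ) (ι : Type) [Fintype ι] :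
    Matrix (ι → Fin d) (ι → Fin d) ℂ :=
  Matrix.of fun x y => ∏ i, ρ (x i) (y i)

/-- The permutation operator `W(π)` acting on the tensor factors. -/
def permOp (d : ℕ) {ι : Type} [Fintype ι] [DecidableEq ι] (π : Equiv.Perm ι) :
    Matrix (ι → Fin d) (ι → Fin d) ℂ :=
  Matrix.of fun x y => if x = y ∘ π then 1 else 0

/-- Entries of a matrix power as sums over walks from `a` to `b`, with `n` intermediate vertices
recorded by `z`. -/
lemma sum_walk_eq_pow_apply {d : ℕ} (ρ : Matrix (Fin d) (Fin d) ℂ) (n : ℕ) (a b : Fin d) :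
    ∑ z : Fin n → Fin d, ∏ j : Fin (n + 1),
      ρ ((Fin.cons a z : Fin (n + 1) → Fin d) j) ((Fin.snoc z b : Fin (n + 1) → Fin d) j)
      = (ρ ^ (n + 1)) a b := by
  induction n generalizing a with
  | zero => simp [Fin.snoc]
  | succ n ih =>
    rw [pow_succ', Matrix.mul_apply, ← (Fin.consEquiv fun _ => Fin d).sum_comp,
      Fintype.sum_prod_type]
    refine Finset.sum_congr rfl fun c _ => ?_
    rw [← ih, Finset.mul_sum]
    refine Finset.sum_congr rfl fun w _ => ?_
    rw [Fin.prod_univ_succ]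
    have hsnoc : (Fin.snoc (Fin.cons c w : Fin (n + 1) → Fin d) b : Fin (n + 2) → Fin d)
        = Fin.cons c (Fin.snoc w b : Fin (n + 1) → Fin d) :=
      (Fin.cons_snoc_eq_snoc_cons c w b).symm
    change ρ a ((Fin.snoc (Fin.cons c w : Fin (n + 1) → Fin d) b : Fin (n + 2) → Fin d) 0) *
      ∏ j : Fin (n + 1), ρ ((Fin.cons c w : Fin (n + 1) → Fin d) j)
        ((Fin.snoc (Fin.cons c w : Fin (n + 1) → Fin d) b : Fin (n + 2) → Fin d) j.succ) = _
    simp only [hsnoc, Fin.cons_zero, Fin.cons_succ]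

/-- The trace of a positive matrix power as a sum over closed walks; `j + 1` is cyclic in
`Fin (n + 1)`. -/
lemma sum_closed_walk_eq_trace {d : ℕ} (ρ : Matrix (Fin d) (Fin d) ℂ) (n : ℕ) :
    ∑ z : Fin (n + 1) → Fin d, ∏ j, ρ (z j) (z (j + 1)) = (ρ ^ (n + 1)).trace := by
  rw [← (Fin.consEquiv fun _ => Fin d).sum_comp, Fintype.sum_prod_type, Matrix.trace]
  refine Finset.sum_congr rfl fun a _ => ?_
  rw [Matrix.diag_apply, ← sum_walk_eq_pow_apply]
  refine Finset.sum_congr rfl fun w _ => Finset.prod_congr rfl fun j _ => ?_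
  congr 1
  induction j using Fin.lastCases with
  | last => simp [Fin.consEquiv]
  | cast i => simp [Fin.consEquiv]

lemma trace_permOp_mul_tensorPow {d : ℕ} (ρ : Matrix (Fin d) (Fin d) ℂ) {ι : Type} [Fintype ι]
    [DecidableEq ι] (π : Equiv.Perm ι) :
    (permOp d π * tensorPow ρ ι).trace = ∑ y : ι → Fin d, ∏ i, ρ (y i) (y (π i)) := by
  simp only [Matrix.trace, Matrix.diag_apply, Matrix.mul_apply, permOp, tensorPow,
    Matrix.of_apply, ite_mul, one_mul, zero_mul]
  rw [Finset.sum_comm]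
  simp

/-- Coset coordinates on a finite abelian group: `(q, j)` is sent to `j • g` plus the chosen
representative of the coset `q`. -/
lemma bijective_out_add_nsmul {A : Type} [AddCommGroup A] [Finite A] (g : A) :
    Function.Bijective fun p : (A ⧸ AddSubgroup.zmultiples g) × Fin (addOrderOf g) =>
      p.1.out + (p.2 : ℕ) • g := by
  constructor
  · rintro ⟨q, i⟩ ⟨r, j⟩ h
    dsimp only at h
    have hmem (n : ℕ) : n • g ∈ AddSubgroup.zmultiples g :=
      nsmul_mem (AddSubgroup.mem_zmultiples g) n
    have hq : q = r := by
      have h' := congrArg (QuotientAddGroup.mk (s := AddSubgroup.zmultiples g)) h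
      simpa [QuotientAddGroup.mk_add_of_mem _ (hmem _)] using h'
    subst hq
    have hij := nsmul_injOn_Iio_addOrderOf (Set.mem_Iio.2 i.2) (Set.mem_Iio.2 j.2)
      (add_left_cancel h)
    rw [Fin.ext hij]
  · intro x
    have hx : -(x : A ⧸ AddSubgroup.zmultiples g).out + x ∈ AddSubgroup.zmultiples g :=
      QuotientAddGroup.eq.1 (by simp)
    classical
    rw [mem_zmultiples_iff_mem_range_addOrderOf] at hx
    obtain ⟨n, hn, hx⟩ := Finset.mem_image.1 hx
    refine ⟨(x, ⟨n, Finset.mem_range.1 hn⟩), ?_⟩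
    simp only at hx ⊢
    rw [hx]
    abel

lemma sum_prod_translate {d k : ℕ} [NeZero k] (ρ : Matrix (Fin d) (Fin d) ℂ) (g : ZMod k) :
    ∑ y : ZMod k → Fin d, ∏ i, ρ (y i) (y (i + g))
      = (ρ ^ addOrderOf g).trace ^ (k / addOrderOf g) := by
  classical
  let e := Equiv.ofBijective _ (bijective_out_add_nsmul g)
  have hcard : Fintype.card (ZMod k ⧸ AddSubgroup.zmultiples g) = k / addOrderOf g := by
    have h := AddSubgroup.card_eq_card_quotient_mul_card_addSubgroup (AddSubgroup.zmultiples g)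
    rw [Nat.card_zmod, Nat.card_zmultiples, Nat.card_eq_fintype_card] at h
    exact (Nat.div_eq_of_eq_mul_left (addOrderOf_pos g) h).symm
  have he (q) (j : Fin (addOrderOf g)) : e (q, j) = q.out + (j : ℕ) • g := rfl
  obtain ⟨n, hn⟩ := Nat.exists_eq_succ_of_ne_zero (addOrderOf_pos g).ne'
  have hmod (a : ℕ) : (a % addOrderOf g) • g = a • g := mod_addOrderOf_nsmul g a
  rw [← hcard]
  clear_value e
  generalize addOrderOf g = m at *
  subst hn
  have hstep (q) (j : Fin (n + 1)) : e (q, j) + g = e (q, j + 1) := by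
    rw [he, he, Fin.val_add, hmod, add_nsmul, add_assoc]
    -- In `Fin 1` the numeral `1` has value `0`, so order one (`g = 0`) is separate.
    rcases n with _ | n
    · have := hmod 1
      simp at this
      simp [← this]
    · simp
  rw [Nat.succ_eq_add_one, ← sum_closed_walk_eq_trace, ← Finset.card_univ, ← Finset.prod_const,
    Finset.prod_univ_sum, Fintype.piFinset_univ]
  refine Fintype.sum_equiv ((e.symm.arrowCongr (Equiv.refl _)).trans (Equiv.curry _ _ _)) _ _
    fun y => ?_
  rw [← e.prod_comp, Fintype.prod_prod_type]
  simp [hstep]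

theorem acceptance_prob_cyclic_group (d k : ℕ) (hd : 1 ≤ d) [NeZero k]
    (ρ : Matrix (Fin d) (Fin d) ℂ) :
    (1 / (k : ℂ)) *
        ∑ g : ZMod k, (permOp d (Equiv.addRight g) * tensorPow ρ (ZMod k)).trace
      = (1 / (k : ℂ)) *
        ∑ m ∈ Nat.divisors k, (Nat.totient m : ℂ) * ((ρ ^ m).trace) ^ (k / m) := by
  congr 1
  simp only [trace_permOp_mul_tensorPow, Equiv.coe_addRight, sum_prod_translate]
  have hdvd (g : ZMod k) : addOrderOf g ∣ k := by
    simpa [ZMod.card] using addOrderOf_dvd_card (x := g)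
  rw [← Finset.sum_fiberwise_of_maps_to (s := Finset.univ) (t := Nat.divisors k)
    (g := fun g : ZMod k => addOrderOf g)
    fun g _ => Nat.mem_divisors.2 ⟨hdvd g, NeZero.ne k⟩]
  refine Finset.sum_congr rfl fun m hm => ?_
  have hcard : (Finset.univ.filter fun g : ZMod k => addOrderOf g = m).card = m.totient :=
    IsAddCyclic.card_addOrderOf_eq_totient (by
      simpa [ZMod.card] using Nat.dvd_of_mem_divisors hm)
  rw [← hcard, ← nsmul_eq_mul, ← Finset.sum_const]
  refine Finset.sum_congr rfl fun g hg => ?_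
  rw [(Finset.mem_filter.1 hg).2]
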